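/- Let L > 0 and define K(k) = ∫₀^{π/2} (1 − k² sin²θ)^{−1/2} dθ for k ∈ (0,1). Then the function f : (0,1) → ℝ given by f(k) = 4(2 − k²)K(k)²/L² is strictly increasing on (0,1), f(k) → 2π²/L² as k → 0⁺, and f(k) → +∞ as k → 1⁻; consequently f maps (0,1) bijectively onto (2π²/L², +∞). -/

import Mathlib

/-!
The double-angle formula gives `1 - k² sin² θ = (2 - k²)/2 · (1 + t cos 2θ)` with
`t = k²/(2 - k²)`, so that `(2 - k²) K(k)² = 2 G(t)²`, where
`G(t) = ∫₀^{π/2} (1 + t cos 2θ)^{-1/2} dθ`. Since `x ↦ (1 + x)^{-1/2}` is strictly convex, so is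
`G` on `(-1, 1)`; and `G` is even, by the substitution `θ ↦ π/2 - θ`. An even strictly convex
function is strictly increasing on the nonnegative half of its domain, and a convex function on an
open interval is continuous. This gives the monotonicity and continuity of the frequency. The
blow-up at `k = 1` comes from `√(1 - k² cos² θ) ≤ √(1 - k²) + θ`, which makes `K(k)` diverge
logarithmically.
-/

open Set Filter Topology Real

lemma strictConvexOn_intervalIntegral {E : Type*} [AddCommMonoid E] [SMul ℝ E] {s : Set E}
    {F : E → ℝ → ℝ} {a b c : ℝ} (hab : a < b) (hcont : ∀ x ∈ s, ContinuousOn (F x) (Icc a b))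
    (hconv : ∀ θ ∈ Icc a b, ConvexOn ℝ s (F · θ)) (hc : c ∈ Icc a b)
    (hstrict : StrictConvexOn ℝ s (F · c)) :
    StrictConvexOn ℝ s fun x ↦ ∫ θ in a..b, F x θ := by
  refine ⟨hstrict.1, fun x hx y hy hxy p q hp hq hpq ↦ ?_⟩
  have hint : ∀ z ∈ s, ∀ r : ℝ,
      IntervalIntegrable (fun θ ↦ r * F z θ) MeasureTheory.volume a b := fun z hz r ↦
    ((hcont z hz).intervalIntegrable_of_Icc hab.le).const_mul r
  calc ∫ θ in a..b, F (p • x + q • y) θ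
    _ < ∫ θ in a..b, (p * F x θ + q * F y θ) :=
      intervalIntegral.integral_lt_integral_of_continuousOn_of_le_of_exists_lt hab
        (hcont _ (hstrict.1 hx hy hp.le hq.le hpq))
        (((hcont x hx).const_mul p).add ((hcont y hy).const_mul q))
        (fun θ hθ ↦ (hconv θ (Ioc_subset_Icc_self hθ)).2 hx hy hp.le hq.le hpq)
        ⟨c, hc, hstrict.2 hx hy hxy hp hq hpq⟩
    _ = p • (∫ θ in a..b, F x θ) + q • ∫ θ in a..b, F y θ := by
      rw [intervalIntegral.integral_add (hint x hx p) (hint y hy q),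
        intervalIntegral.integral_const_mul, intervalIntegral.integral_const_mul,
        smul_eq_mul, smul_eq_mul]

lemma strictMonoOn_of_strictConvexOn_of_even {g : ℝ → ℝ} {r : ℝ}
    (hconv : StrictConvexOn ℝ (Ioo (-r) r) g) (heven : g.Even) : StrictMonoOn g (Ico 0 r) := by
  intro x ⟨hx0, _⟩ y ⟨_, hyr⟩ hxy
  have hmem : x ∈ openSegment ℝ (-y) y := by
    rw [openSegment_eq_Ioo (by linarith)]
    exact ⟨by linarith, hxy⟩
  have hlt := hconv.lt_on_openSegment ⟨by linarith, by linarith⟩ ⟨by linarith, hyr⟩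
    (by linarith) hmem
  rwa [heven y, max_self] at hlt

lemma bijOn_Ioo_Ioi_of_strictMonoOn_of_tendsto {α β : Type*} [ConditionallyCompleteLinearOrder α]
    [TopologicalSpace α] [OrderTopology α] [DenselyOrdered α] [LinearOrder β] [TopologicalSpace β]
    [OrderClosedTopology β] {f : α → β} {a b : α} (hab : a < b) (hmono : StrictMonoOn f (Ico a b))
    (hcont : ContinuousOn f (Ico a b)) (htop : Tendsto f (𝓝[<] b) atTop) :
    BijOn f (Ioo a b) (Ioi (f a)) := by
  have ha : a ∈ Ico a b := left_mem_Ico.2 hab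
  have hleft : Tendsto f (𝓝[>] a) (𝓝 (f a)) := by
    rw [← nhdsWithin_Ioo_eq_nhdsGT hab]
    exact (hcont a ha).mono Ioo_subset_Ico_self
  have := nhdsGT_neBot_of_exists_gt ⟨b, hab⟩
  have := nhdsLT_neBot_of_exists_lt ⟨a, hab⟩
  refine ⟨fun x hx ↦ hmono ha (Ioo_subset_Ico_self hx) hx.1,
    (hmono.mono Ioo_subset_Ico_self).injOn, ?_⟩
  exact isPreconnected_Ioo.intermediate_value_Ioi (le_principal_iff.2 (Ioo_mem_nhdsGT hab))
    (le_principal_iff.2 (Ioo_mem_nhdsLT hab)) (hcont.mono Ioo_subset_Ico_self) hleft htop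

lemma strictConvexOn_one_div_sqrt : StrictConvexOn ℝ (Ioi 0) fun x : ℝ ↦ 1 / √x := by
  have hsqrt : StrictConcaveOn ℝ (Ioi 0) Real.sqrt :=
    strictConcaveOn_sqrt.subset Ioi_subset_Ici_self (convex_Ioi 0)
  have himage : Real.sqrt '' Ioi 0 = Ioi 0 :=
    Subset.antisymm (image_subset_iff.2 fun _ hx ↦ sqrt_pos.2 hx)
      fun y hy ↦ ⟨y ^ 2, pow_pos (mem_Ioi.1 hy) 2, sqrt_sq (le_of_lt hy)⟩
  have hinv : ConvexOn ℝ (Real.sqrt '' Ioi 0) fun x : ℝ ↦ 1 / x := by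
    simpa only [himage, zpow_neg_one, one_div] using convexOn_zpow (-1)
  have hanti : StrictAntiOn (fun x : ℝ ↦ 1 / x) (Real.sqrt '' Ioi 0) := by
    rw [himage]
    exact one_div_strictAntiOn
  exact hinv.comp_strictConcaveOn hsqrt hanti

lemma tendsto_integral_one_div_add_atTop {b : ℝ} (hb : 0 < b) :
    Tendsto (fun d : ℝ ↦ ∫ θ in (0 : ℝ)..b, 1 / (d + θ)) (𝓝[>] 0) atTop := by
  have hquot : Tendsto (fun d : ℝ ↦ (d + b) / d) (𝓝[>] 0) atTop := by
    refine Tendsto.pos_mul_atTop hb ?_ tendsto_inv_nhdsGT_zero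
    exact ((continuous_add_const b).tendsto' 0 b (zero_add b)).mono_left nhdsWithin_le_nhds
  refine (tendsto_log_atTop.comp hquot).congr' ?_
  filter_upwards [self_mem_nhdsWithin] with d (hd : 0 < d)
  rw [intervalIntegral.integral_comp_add_left (fun x ↦ 1 / x) d, add_zero,
    integral_one_div_of_pos hd (by positivity), Function.comp_apply]

/-- The complete elliptic integral of the first kind `K(k)`, as a function of the modulus `k`;
the integral is the intended one for `|k| < 1`. -/
noncomputable def ellipticK (k : ℝ) : ℝ :=
  ∫ θ in (0 : ℝ)..(π / 2), 1 / √(1 - k ^ 2 * sin θ ^ 2)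

/-- The integral `G(t) = ∫₀^{π/2} (1 + t cos 2θ)^{-1/2} dθ`, meaningful for `|t| < 1`: up to the
factor `√((2 - k²)/2)`, this is `K(k)` reparametrized so that it becomes even and convex. -/
noncomputable def doubleAngleK (t : ℝ) : ℝ :=
  ∫ θ in (0 : ℝ)..(π / 2), 1 / √(1 + t * cos (2 * θ))

/-- The parameter `t = k²/(2 - k²)` at which `doubleAngleK` represents `ellipticK k`. -/
noncomputable def doubleAngleParam (k : ℝ) : ℝ := k ^ 2 / (2 - k ^ 2)

/-- The frequency `4 (2 - k²) K(k)² / L²` of the `L`-periodic dnoidal standing wave of the cubic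
NLS equation with modulus `k`. -/
noncomputable def dnoidalFrequency (L k : ℝ) : ℝ := 4 * (2 - k ^ 2) * ellipticK k ^ 2 / L ^ 2

lemma ellipticK_zero : ellipticK 0 = π / 2 := by simp [ellipticK]

lemma doubleAngleK_nonneg (t : ℝ) : 0 ≤ doubleAngleK t :=
  intervalIntegral.integral_nonneg (by positivity) fun θ _ ↦ by positivity

lemma even_doubleAngleK : doubleAngleK.Even := fun t ↦ by
  have hreflect := intervalIntegral.integral_comp_sub_left (a := 0) (b := π / 2)
    (fun θ : ℝ ↦ 1 / √(1 + t * cos (2 * θ))) (π / 2)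
  simpa [mul_sub, mul_div_cancel₀, cos_pi_sub, doubleAngleK] using hreflect

lemma one_add_mul_cos_pos {t : ℝ} (ht : t ∈ Ioo (-1) 1) (θ : ℝ) : 0 < 1 + t * cos θ := by
  have habs : |t * cos θ| < 1 := by
    rw [abs_mul]
    exact mul_lt_one_of_nonneg_of_lt_one_left (abs_nonneg t) (abs_lt.2 ht) (abs_cos_le_one θ)
  linarith [(abs_lt.1 habs).1]

lemma strictConvexOn_doubleAngleK : StrictConvexOn ℝ (Ioo (-1) 1) doubleAngleK := by
  have hconv (θ : ℝ) : ConvexOn ℝ (Ioo (-1) 1) fun t : ℝ ↦ 1 / √(1 + t * cos (2 * θ)) := by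
    have haff := strictConvexOn_one_div_sqrt.convexOn.comp_affineMap
      (AffineMap.lineMap 1 (1 + cos (2 * θ)))
    refine (haff.subset (fun t ht ↦ ?_) (convex_Ioo _ _)).congr fun t _ ↦ ?_
    · simpa [AffineMap.lineMap_apply, add_comm] using one_add_mul_cos_pos ht (2 * θ)
    · simp [AffineMap.lineMap_apply, add_comm]
  have hstrict : StrictConvexOn ℝ (Ioo (-1) 1) fun t : ℝ ↦ 1 / √(1 + t * cos (2 * 0)) := by
    simp only [mul_zero, cos_zero, mul_one]
    refine (strictConvexOn_one_div_sqrt.translate_right 1).subset (fun t ht ↦ ?_) (convex_Ioo _ _)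
    exact neg_lt_iff_pos_add'.1 ht.1
  refine strictConvexOn_intervalIntegral (by positivity) (fun t ht ↦ ?_) (fun θ _ ↦ hconv θ)
    (left_mem_Icc.2 (by positivity)) hstrict
  exact continuousOn_const.div (by fun_prop) fun θ _ ↦
    (sqrt_pos.2 (one_add_mul_cos_pos ht (2 * θ))).ne'

lemma strictMonoOn_doubleAngleK : StrictMonoOn doubleAngleK (Ico 0 1) :=
  strictMonoOn_of_strictConvexOn_of_even strictConvexOn_doubleAngleK even_doubleAngleK

lemma continuousOn_doubleAngleK : ContinuousOn doubleAngleK (Ioo (-1) 1) :=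
  strictConvexOn_doubleAngleK.convexOn.continuousOn isOpen_Ioo

lemma doubleAngleK_doubleAngleParam {k : ℝ} (hk : k ^ 2 < 2) :
    doubleAngleK (doubleAngleParam k) = √((2 - k ^ 2) / 2) * ellipticK k := by
  have hpos : 0 < (2 - k ^ 2) / 2 := by linarith
  have hne : 2 - k ^ 2 ≠ 0 := by linarith
  have hfactor (θ : ℝ) : 1 - k ^ 2 * sin θ ^ 2
      = (2 - k ^ 2) / 2 * (1 + doubleAngleParam k * cos (2 * θ)) := by
    rw [doubleAngleParam, cos_two_mul, cos_sq']
    field_simp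
    ring
  rw [doubleAngleK, ellipticK, ← intervalIntegral.integral_const_mul]
  refine intervalIntegral.integral_congr fun θ _ ↦ ?_
  have hsqrt : √((2 - k ^ 2) / 2) ≠ 0 := (sqrt_pos.2 hpos).ne'
  simp only [hfactor, sqrt_mul hpos.le]
  rw [mul_one_div, div_mul_cancel_left₀ hsqrt, one_div]

lemma mapsTo_doubleAngleParam : MapsTo doubleAngleParam (Ioo (-1) 1) (Ico 0 1) := by
  intro k hk
  have hk1 : k ^ 2 < 1 := (sq_lt_one_iff_abs_lt_one k).2 (abs_lt.2 hk)
  exact ⟨div_nonneg (sq_nonneg k) (by linarith), (div_lt_one (by linarith)).2 (by linarith)⟩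

lemma continuousOn_doubleAngleParam : ContinuousOn doubleAngleParam (Ioo (-1) 1) := by
  refine ContinuousOn.div (by fun_prop) (by fun_prop) fun k hk ↦ ?_
  nlinarith [hk.1, hk.2]

lemma strictMonoOn_doubleAngleParam : StrictMonoOn doubleAngleParam (Ico 0 1) := by
  intro x ⟨hx0, _⟩ y ⟨hy0, hy1⟩ hxy
  have hsq : x ^ 2 < y ^ 2 := pow_lt_pow_left₀ hxy hx0 two_ne_zero
  have hy : y ^ 2 < 1 := pow_lt_one₀ hy0 hy1 two_ne_zero
  exact div_lt_div₀ hsq (by linarith) (sq_nonneg y) (by linarith)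

lemma integral_one_div_add_le_ellipticK {k : ℝ} (hk : k ^ 2 < 1) :
    ∫ θ in (0 : ℝ)..(π / 2), 1 / (√(1 - k ^ 2) + θ) ≤ ellipticK k := by
  have hd : 0 < √(1 - k ^ 2) := sqrt_pos.2 (by linarith)
  have hpos (θ : ℝ) : 0 < 1 - k ^ 2 * cos θ ^ 2 := by
    nlinarith [cos_sq_le_one θ, sq_nonneg k]
  have hreflect : ellipticK k = ∫ θ in (0 : ℝ)..(π / 2), 1 / √(1 - k ^ 2 * cos θ ^ 2) := by
    have := intervalIntegral.integral_comp_sub_left (a := 0) (b := π / 2)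
      (fun θ : ℝ ↦ 1 / √(1 - k ^ 2 * sin θ ^ 2)) (π / 2)
    simpa [sin_pi_div_two_sub, ellipticK] using this.symm
  have hbound : ∀ θ ∈ Icc 0 (π / 2), √(1 - k ^ 2 * cos θ ^ 2) ≤ √(1 - k ^ 2) + θ := by
    intro θ ⟨hθ, _⟩
    have hsin : k ^ 2 * sin θ ^ 2 ≤ θ ^ 2 :=
      (mul_le_of_le_one_left (sq_nonneg _) hk.le).trans sin_sq_le_sq
    rw [sqrt_le_iff, add_sq, sq_sqrt (by linarith), cos_sq']
    exact ⟨by positivity, by linarith [mul_nonneg hd.le hθ]⟩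
  rw [hreflect]
  refine intervalIntegral.integral_mono_on (by positivity) ?_ ?_ fun θ hθ ↦
    one_div_le_one_div_of_le (sqrt_pos.2 (hpos θ)) (hbound θ hθ)
  · refine ContinuousOn.intervalIntegrable_of_Icc (by positivity) ?_
    exact continuousOn_const.div (by fun_prop) fun θ hθ ↦ (add_pos_of_pos_of_nonneg hd hθ.1).ne'
  · refine Continuous.intervalIntegrable ?_ _ _
    exact continuous_const.div (by fun_prop) fun θ ↦ (sqrt_pos.2 (hpos θ)).ne'

lemma tendsto_ellipticK_atTop : Tendsto ellipticK (𝓝[<] 1) atTop := by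
  have hsq : ∀ᶠ k : ℝ in 𝓝[<] 1, k ^ 2 < 1 := by
    filter_upwards [Ioo_mem_nhdsLT (zero_lt_one (α := ℝ))] with k hk
    exact pow_lt_one₀ hk.1.le hk.2 two_ne_zero
  have hsqrt : Tendsto (fun k : ℝ ↦ √(1 - k ^ 2)) (𝓝[<] 1) (𝓝[>] 0) := by
    refine tendsto_nhdsWithin_iff.2 ⟨?_, hsq.mono fun k hk ↦ sqrt_pos.2 (by linarith)⟩
    have hcont : Continuous fun k : ℝ ↦ √(1 - k ^ 2) := by fun_prop
    exact (hcont.tendsto' 1 0 (by simp)).mono_left nhdsWithin_le_nhds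
  exact tendsto_atTop_mono' _ (hsq.mono fun k hk ↦ integral_one_div_add_le_ellipticK hk)
    ((tendsto_integral_one_div_add_atTop (by positivity)).comp hsqrt)

lemma dnoidalFrequency_zero (L : ℝ) : dnoidalFrequency L 0 = 2 * π ^ 2 / L ^ 2 := by
  rw [dnoidalFrequency, ellipticK_zero]
  ring

lemma eqOn_dnoidalFrequency_doubleAngleK (L : ℝ) : EqOn (dnoidalFrequency L)
    (fun k ↦ 8 / L ^ 2 * doubleAngleK (doubleAngleParam k) ^ 2) (Ioo (-1) 1) := by
  intro k hk
  have hk2 : k ^ 2 < 2 := by nlinarith [hk.1, hk.2]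
  simp only [doubleAngleK_doubleAngleParam hk2, mul_pow, dnoidalFrequency]
  rw [sq_sqrt (by linarith)]
  ring

lemma strictMonoOn_dnoidalFrequency {L : ℝ} (hL : L ≠ 0) :
    StrictMonoOn (dnoidalFrequency L) (Ico 0 1) := by
  have hsub : Ico (0 : ℝ) 1 ⊆ Ioo (-1) 1 := Ico_subset_Ioo_left (by norm_num)
  refine StrictMonoOn.congr ?_ ((eqOn_dnoidalFrequency_doubleAngleK L).symm.mono hsub)
  intro x hx y hy hxy
  have hlt := strictMonoOn_doubleAngleK.comp strictMonoOn_doubleAngleParam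
    (mapsTo_doubleAngleParam.mono_left hsub) hx hy hxy
  exact mul_lt_mul_of_pos_left (pow_lt_pow_left₀ hlt (doubleAngleK_nonneg _) two_ne_zero)
    (by positivity)

lemma continuousOn_dnoidalFrequency (L : ℝ) :
    ContinuousOn (dnoidalFrequency L) (Ioo (-1) 1) := by
  have hcomp := continuousOn_doubleAngleK.comp continuousOn_doubleAngleParam
    (mapsTo_doubleAngleParam.mono_right (Ico_subset_Ioo_left (by norm_num)))
  exact ((hcomp.pow 2).const_mul (8 / L ^ 2)).congr (eqOn_dnoidalFrequency_doubleAngleK L)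

lemma tendsto_dnoidalFrequency_atTop {L : ℝ} (hL : L ≠ 0) :
    Tendsto (dnoidalFrequency L) (𝓝[<] 1) atTop := by
  have hfactor : Tendsto (fun k : ℝ ↦ 4 * (2 - k ^ 2)) (𝓝[<] 1) (𝓝 4) := by
    have hcont : Continuous fun k : ℝ ↦ 4 * (2 - k ^ 2) := by fun_prop
    exact (hcont.tendsto' 1 4 (by norm_num)).mono_left nhdsWithin_le_nhds
  have hsq := (tendsto_pow_atTop two_ne_zero).comp tendsto_ellipticK_atTop
  exact (hfactor.pos_mul_atTop (by norm_num) hsq).atTop_div_const (by positivity)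

/-- the dnoidal frequency map `f(k) = 4(2−k²)K(k)²/L²` is strictly
increasing on `(0,1)`, tends to `2π²/L²` as `k → 0⁺` and to `+∞` as `k → 1⁻`, and maps
`(0,1)` bijectively onto `(2π²/L², ∞)`. -/
theorem dnoidal_frequency_map
    (L : ℝ) (hL : 0 < L)
    (K : ℝ → ℝ)
    (hK : ∀ k : ℝ, K k = ∫ θ in (0:ℝ)..(Real.pi / 2),
      1 / Real.sqrt (1 - k ^ 2 * Real.sin θ ^ 2))
    (f : ℝ → ℝ)
    (hf : ∀ k : ℝ, f k = 4 * (2 - k ^ 2) * (K k) ^ 2 / L ^ 2) :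
    StrictMonoOn f (Set.Ioo 0 1)
    ∧ Filter.Tendsto f (nhdsWithin 0 (Set.Ioi 0)) (nhds (2 * Real.pi ^ 2 / L ^ 2))
    ∧ Filter.Tendsto f (nhdsWithin 1 (Set.Iio 1)) Filter.atTop
    ∧ Set.BijOn f (Set.Ioo 0 1) (Set.Ioi (2 * Real.pi ^ 2 / L ^ 2)) := by
  obtain rfl : K = ellipticK := funext hK
  obtain rfl : f = dnoidalFrequency L := funext hf
  have hmono := strictMonoOn_dnoidalFrequency hL.ne'
  have hcont := continuousOn_dnoidalFrequency L
  have htop := tendsto_dnoidalFrequency_atTop hL.ne'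
  have hzero : ContinuousAt (dnoidalFrequency L) 0 :=
    hcont.continuousAt (Ioo_mem_nhds (by norm_num) one_pos)
  rw [← dnoidalFrequency_zero L]
  exact ⟨hmono.mono Ioo_subset_Ico_self, hzero.tendsto.mono_left nhdsWithin_le_nhds, htop,
    bijOn_Ioo_Ioi_of_strictMonoOn_of_tendsto one_pos hmono
      (hcont.mono (Ico_subset_Ioo_left (by norm_num))) htop⟩
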